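/- Let G be a finite simple graph with a perfect matching, let v be a vertex of G, and let M₁ and M₂ be two perfect matchings of G. Then the reachable set of v with respect to M₁ equals the reachable set of v with respect to M₂, i.e., R(M₁, v) = R(M₂, v). -/

import Mathlib

open SimpleGraph

variable {V : Type*} [Fintype V] [DecidableEq V]

/-- `M` is a matching of `G`: a set of edges of `G` that are pairwise nonadjacent
(no two distinct edges of `M` share an endpoint). -/
def IsMatching' (G : SimpleGraph V) (M : Finset (Sym2 V)) : Prop :=
  (∀ e ∈ M, e ∈ G.edgeSet) ∧
  ∀ e ∈ M, ∀ f ∈ M, e ≠ f → ∀ x : V, x ∈ e → x ∉ f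

/-- A matching is perfect if every vertex is an endpoint of some edge of `M`. -/
def IsPerfectMatching' (G : SimpleGraph V) (M : Finset (Sym2 V)) : Prop :=
  IsMatching' G M ∧ ∀ v : V, ∃ e ∈ M, v ∈ e

/-- A matching is maximum if it has the largest possible cardinality among matchings. -/
def IsMaximumMatching' (G : SimpleGraph V) (M : Finset (Sym2 V)) : Prop :=
  IsMatching' G M ∧ ∀ N : Finset (Sym2 V), IsMatching' G N → N.card ≤ M.card

/-- A walk is `M`-alternating: for each pair of consecutive edges of the walk,
exactly one of them belongs to `M`. -/
def IsAltWalk {G : SimpleGraph V} (M : Finset (Sym2 V)) {u v : V} (w : G.Walk u v) : Prop :=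
  List.Chain' (fun e f => (e ∈ M ↔ f ∉ M)) w.edges

/-- A walk is `M`-mm-alternating: it is `M`-alternating and its first and last
edges belong to `M` (in particular the walk has at least one edge). -/
def IsMMAltWalk {G : SimpleGraph V} (M : Finset (Sym2 V)) {u v : V} (w : G.Walk u v) : Prop :=
  IsAltWalk M w ∧ (∃ e, w.edges.head? = some e ∧ e ∈ M) ∧
    (∃ e, w.edges.getLast? = some e ∧ e ∈ M)

/-- A walk is `M`-nn-alternating: it is `M`-alternating and its first and last
edges do not belong to `M`. -/
def IsNNAltWalk {G : SimpleGraph V} (M : Finset (Sym2 V)) {u v : V} (w : G.Walk u v) : Prop :=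
  IsAltWalk M w ∧ (∃ e, w.edges.head? = some e ∧ e ∉ M) ∧
    (∃ e, w.edges.getLast? = some e ∧ e ∉ M)

/-- The reachable set `R(M, v)`: vertices `u` admitting an `M`-mm-alternating walk
from `v` to `u`. -/
def Reach (G : SimpleGraph V) (M : Finset (Sym2 V)) (v : V) : Set V :=
  {u | ∃ w : G.Walk v u, IsMMAltWalk M w}

/-- `c` is an `M`-blossom with base `b`: an odd cycle of length `2k+1` containing
exactly `k` edges of `M`, whose base `b` is not matched by `M` within the cycle. -/
def IsBlossom (G : SimpleGraph V) (M : Finset (Sym2 V)) {b : V} (c : G.Walk b b) : Prop :=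
  c.IsCycle ∧ Odd c.length ∧
  2 * (c.edges.countP (fun e => decide (e ∈ M))) + 1 = c.length ∧
  ∀ e ∈ c.edges, e ∈ M → b ∉ e

/-- An `M`-Jposy: two (not necessarily distinct) `M`-blossoms joined by an
odd-length `M`-alternating walk whose endpoints are the bases of the blossoms. -/
structure Jposy (G : SimpleGraph V) (M : Finset (Sym2 V)) where
  b₁ : V
  b₂ : V
  c₁ : G.Walk b₁ b₁
  c₂ : G.Walk b₂ b₂
  walk : G.Walk b₁ b₂
  blossom₁ : IsBlossom G M c₁
  blossom₂ : IsBlossom G M c₂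
  odd : Odd walk.length
  alt : IsAltWalk M walk

/-- The vertices of a Jposy: the vertices of its two blossoms and of its joining walk. -/
def Jposy.verts {G : SimpleGraph V} {M : Finset (Sym2 V)} (J : Jposy G M) : Set V :=
  {v | v ∈ J.c₁.support ∨ v ∈ J.c₂.support ∨ v ∈ J.walk.support}

/-- `v` belongs to some `M`-Jposy of `G`. -/
def InJposy (G : SimpleGraph V) (M : Finset (Sym2 V)) (v : V) : Prop :=
  ∃ J : Jposy G M, v ∈ J.verts

/-- `V_SD(G)`: vertices belonging to an `M`-Jposy for some maximum matching `M` of `G`. -/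
def VSD (G : SimpleGraph V) : Set V :=
  {v | ∃ M : Finset (Sym2 V), IsMaximumMatching' G M ∧ InJposy G M v}

/-! For a set `S` of vertices let `A` consist of `v` and all neighbours of vertices of `S`, and
regard a matching `M` as the map sending each matched vertex to its partner. If `M` maps `A` into
`S`, then every `M`-edge of an mm-alternating walk from `v` ends in `S`; in fact `R(M, v)` is the
least `S` that `M` maps `A` into. This property of `S` is the same for `M₁` and `M₂`: if `M₁` maps
`A` into `S`, then `A` has at most as many matched vertices as `S`, while `M₂` maps the matched
vertices of `S` injectively into `A`. Hence `M₂` pairs the matched vertices of `S` with those of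
`A`, and so maps `A` into `S`. -/

theorem mapsTo_of_involutive {α : Type*} {s t : Set α} {f g : α → α} (hs : s.Finite)
    (hf : Set.MapsTo f t s) (hf_inj : Set.InjOn f t) (hg : Set.MapsTo g s t)
    (hg_inv : Function.Involutive g) : Set.MapsTo g t s := by
  have card_le : t.ncard ≤ (g '' s).ncard := by
    rw [Set.ncard_image_of_injective s hg_inv.injective]
    exact Set.ncard_le_ncard_of_injOn f hf hf_inj hs
  have image_eq : g '' s = t :=
    Set.eq_of_subset_of_ncard_le hg.image_subset card_le (hs.of_injOn hf hf_inj)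
  exact (hg_inv.leftInverse.leftInvOn s).mapsTo image_eq.superset

section

variable {α : Type*} {G : SimpleGraph α} {M M₁ M₂ : Finset (Sym2 α)} {u v x y z : α}

/-- The vertices covered by `M`, written with ordered pairs so that membership exhibits a partner.
The reachable sets of a matching depend only on this set. -/
def matchedVerts (M : Finset (Sym2 α)) : Set α :=
  {x | ∃ y, s(x, y) ∈ M}

theorem mem_matchedVerts_iff_exists_mem : x ∈ matchedVerts M ↔ ∃ e ∈ M, x ∈ e := by
  constructor
  · rintro ⟨y, hy⟩
    exact ⟨s(x, y), hy, Sym2.mem_mk_left x y⟩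
  · rintro ⟨e, he, hx⟩
    obtain ⟨y, rfl⟩ := Sym2.mem_iff_exists.1 hx
    exact ⟨y, he⟩

theorem finite_matchedVerts (M : Finset (Sym2 α)) : (matchedVerts M).Finite := by
  have eq_biUnion : matchedVerts M = ⋃ e ∈ M, {x | x ∈ e} := by
    ext x
    simp [mem_matchedVerts_iff_exists_mem]
  rw [eq_biUnion]
  refine M.finite_toSet.biUnion fun e _ => ?_
  induction e with
  | h a b => simp [Set.ofPred_or]

open Classical in
/-- The other endpoint of an edge of `M` at `x`; unmatched vertices are sent to themselves, which
makes this an involution for every matching `M`. -/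
noncomputable def mate (M : Finset (Sym2 α)) (x : α) : α :=
  if h : x ∈ matchedVerts M then Exists.choose h else x

theorem mk_mate_mem (hx : x ∈ matchedVerts M) : s(x, mate M x) ∈ M := by
  rw [mate, dif_pos hx]
  exact Exists.choose_spec hx

theorem mate_mem_matchedVerts (hx : x ∈ matchedVerts M) : mate M x ∈ matchedVerts M :=
  ⟨x, Sym2.eq_swap ▸ mk_mate_mem hx⟩

namespace IsMatching'

theorem adj (hM : IsMatching' G M) (h : s(x, y) ∈ M) : G.Adj x y :=
  hM.1 _ h

theorem eq_of_mk_mem (hM : IsMatching' G M) (hy : s(x, y) ∈ M) (hz : s(x, z) ∈ M) : y = z := by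
  by_contra hne
  exact hM.2 _ hy _ hz (mt Sym2.congr_right.1 hne) x (Sym2.mem_mk_left x y) (Sym2.mem_mk_left x z)

theorem mate_eq (hM : IsMatching' G M) (h : s(x, y) ∈ M) : mate M x = y :=
  hM.eq_of_mk_mem (mk_mate_mem ⟨y, h⟩) h

theorem mate_involutive (hM : IsMatching' G M) : Function.Involutive (mate M) := by
  intro x
  by_cases hx : x ∈ matchedVerts M
  · exact hM.mate_eq (Sym2.eq_swap ▸ mk_mate_mem hx)
  · have mate_self : mate M x = x := dif_neg hx
    rw [mate_self, mate_self]

end IsMatching'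

theorem IsPerfectMatching'.matchedVerts_eq_univ (hM : IsPerfectMatching' G M) :
    matchedVerts M = Set.univ :=
  Set.eq_univ_of_forall fun x => mem_matchedVerts_iff_exists_mem.2 (hM.2 x)

theorem isAltWalk_iff_isChain {w : G.Walk u v} :
    IsAltWalk M w ↔ w.edges.IsChain (fun e f => e ∈ M ↔ f ∉ M) :=
  Iff.rfl

theorem isMMAltWalk_toWalk (h : G.Adj u v) : IsMMAltWalk M h.toWalk ↔ s(u, v) ∈ M := by
  simp [IsMMAltWalk, isAltWalk_iff_isChain]

theorem isMMAltWalk_cons_cons (hux : G.Adj u x) (hxy : G.Adj x y) (p : G.Walk y z) :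
    IsMMAltWalk M (.cons hux (.cons hxy p)) ↔
      s(u, x) ∈ M ∧ s(x, y) ∉ M ∧ IsMMAltWalk M p := by
  cases p <;> grind [IsMMAltWalk, isAltWalk_iff_isChain, Walk.edges_cons, Walk.edges_nil]

theorem IsMMAltWalk.concat_concat {w : G.Walk v u} (hw : IsMMAltWalk M w) (hux : G.Adj u x)
    (hxy : G.Adj x y) (hux_notMem : s(u, x) ∉ M) (hxy_mem : s(x, y) ∈ M) :
    IsMMAltWalk M ((w.concat hux).concat hxy) := by
  obtain ⟨alt, ⟨e, head_eq, he⟩, f, last_eq, hf⟩ := hw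
  refine ⟨?_, ⟨e, ?_, he⟩, s(x, y), ?_, hxy_mem⟩
  · simp only [isAltWalk_iff_isChain, Walk.edges_concat, List.concat_eq_append,
      List.append_assoc] at alt ⊢
    refine alt.append (by simp [hux_notMem, hxy_mem]) ?_
    simp [last_eq, hf, hux_notMem]
  · simp [Walk.edges_concat, head_eq]
  · simp [Walk.edges_concat]

theorem IsMMAltWalk.end_mem {A S : Set α} (hA : ∀ ⦃x y⦄, s(x, y) ∈ M → x ∈ A → y ∈ S)
    (hS : ∀ ⦃x y⦄, G.Adj x y → s(x, y) ∉ M → x ∈ S → y ∈ A) :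
    ∀ {u v : α} {w : G.Walk u v}, IsMMAltWalk M w → u ∈ A → v ∈ S
  | _, _, .nil, hw, _ => by simp [IsMMAltWalk] at hw
  | _, _, .cons h .nil, hw, hu => hA ((isMMAltWalk_toWalk h).1 hw) hu
  | _, _, .cons hux (.cons hxy p), hw, hu => by
    obtain ⟨hux_mem, hxy_notMem, hp⟩ := (isMMAltWalk_cons_cons hux hxy p).1 hw
    exact hp.end_mem hA hS (hS hxy hxy_notMem (hA hux_mem hu))

/-- The closure property of which `Reach G M v` is the least solution: `S` contains the
`M`-partner of `v` and of every neighbour of a vertex of `S`. A neighbour `x` of `u ∈ S` with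
`s(u, x) ∈ M` may be included because its partner is `u` itself; this makes the set of vertices
whose partners are required independent of `M`. -/
def IsReachClosed (G : SimpleGraph α) (M : Finset (Sym2 α)) (v : α) (S : Set α) : Prop :=
  ∀ ⦃x y⦄, s(x, y) ∈ M → x ∈ insert v (⋃ u ∈ S, G.neighborSet u) → y ∈ S

theorem isLeast_reach (hM : IsMatching' G M) (v : α) :
    IsLeast {S | IsReachClosed G M v S} (Reach G M v) := by
  constructor
  · intro x y hxy hx
    rcases hx with rfl | hx
    · exact ⟨(hM.adj hxy).toWalk, (isMMAltWalk_toWalk _).2 hxy⟩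
    obtain ⟨u, ⟨w, hw⟩, hux⟩ := Set.mem_iUnion₂.1 hx
    by_cases hux_mem : s(u, x) ∈ M
    · obtain rfl : u = y := hM.eq_of_mk_mem (Sym2.eq_swap ▸ hux_mem) hxy
      exact ⟨w, hw⟩
    · exact ⟨_, hw.concat_concat hux (hM.adj hxy) hux_mem hxy⟩
  · rintro S hS u ⟨w, hw⟩
    exact hw.end_mem hS (fun x y hxy _ hx => .inr (Set.mem_biUnion hx hxy)) (.inl rfl)

theorem IsReachClosed.of_matchedVerts_eq {S : Set α} (hS : IsReachClosed G M₁ v S)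
    (h₁ : IsMatching' G M₁) (h₂ : IsMatching' G M₂) (h : matchedVerts M₁ = matchedVerts M₂) :
    IsReachClosed G M₂ v S := by
  let A : Set α := insert v (⋃ u ∈ S, G.neighborSet u)
  have mapsTo₁ : Set.MapsTo (mate M₁) (A ∩ matchedVerts M₁) (S ∩ matchedVerts M₁) :=
    fun x hx => ⟨hS (mk_mate_mem hx.2) hx.1, mate_mem_matchedVerts hx.2⟩
  have mapsTo₂ : Set.MapsTo (mate M₂) (S ∩ matchedVerts M₂) (A ∩ matchedVerts M₂) :=
    fun x hx => ⟨.inr (Set.mem_biUnion hx.1 (h₂.adj (mk_mate_mem hx.2))),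
      mate_mem_matchedVerts hx.2⟩
  rw [h] at mapsTo₁
  have mapsTo₂_symm : Set.MapsTo (mate M₂) (A ∩ matchedVerts M₂) (S ∩ matchedVerts M₂) :=
    mapsTo_of_involutive ((finite_matchedVerts M₂).inter_of_right S) mapsTo₁
      h₁.mate_involutive.injective.injOn mapsTo₂ h₂.mate_involutive
  intro x y hxy hx
  rw [← h₂.mate_eq hxy]
  exact (mapsTo₂_symm ⟨hx, y, hxy⟩).1

theorem reachability_lemma_general (h₁ : IsMatching' G M₁) (h₂ : IsMatching' G M₂)
    (h : matchedVerts M₁ = matchedVerts M₂) (v : α) : Reach G M₁ v = Reach G M₂ v := by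
  have closed_iff (S : Set α) : IsReachClosed G M₁ v S ↔ IsReachClosed G M₂ v S :=
    ⟨fun hS => hS.of_matchedVerts_eq h₁ h₂ h, fun hS => hS.of_matchedVerts_eq h₂ h₁ h.symm⟩
  have least₁ := isLeast_reach h₁ v
  simp only [closed_iff] at least₁
  exact least₁.unique (isLeast_reach h₂ v)

end

/-- **Reachability Lemma.** For a graph with a perfect matching, the reachable set
of a vertex does not depend on the choice of the perfect matching. -/
theorem reachability_lemma (G : SimpleGraph V) (v : V) (M₁ M₂ : Finset (Sym2 V))
    (h₁ : IsPerfectMatching' G M₁) (h₂ : IsPerfectMatching' G M₂) :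
    Reach G M₁ v = Reach G M₂ v :=
  reachability_lemma_general h₁.1 h₂.1
    (h₁.matchedVerts_eq_univ.trans h₂.matchedVerts_eq_univ.symm) v
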